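/- (Proposition 4.2, stated with q replaced by q^2 to avoid half-integer powers.) Let q be a complex number with 0 < |q| < 1, and let k and i be positive integers with 1 ≤ i ≤ k, k ≥ 2. Then ∑_{s_1 ≥ s_2 ≥ ⋯ ≥ s_{k-1} ≥ 0} q^{2(s_1^2 + ⋯ + s_{k-1}^2) - (s_i + ⋯ + s_{k-1})} / [(q^2;q^2)_{s_1-s_2} ⋯ (q^2;q^2)_{s_{k-2}-s_{k-1}} (q;q)_{2 s_{k-1}}] = (q^{4i}, -q^{2i-1}, -q^{2i+1}; q^{4i})_∞ / (q^2;q^2)_∞, where the linear term s_i + ⋯ + s_{k-1} is empty (equal to 0) when i = k. -/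

import Mathlib

/-- The finite q-Pochhammer symbol `(x;q)_n = ∏_{j=0}^{n-1} (1 - x q^j)`. -/
noncomputable def qPoch (x q : ℂ) (n : ℕ) : ℂ := ∏ j ∈ Finset.range n, (1 - x * q ^ j)

/-- The infinite q-Pochhammer symbol `(x;q)_∞ = ∏_{j=0}^{∞} (1 - x q^j)`. -/
noncomputable def qPochInf (x q : ℂ) : ℂ := ∏' j : ℕ, (1 - x * q ^ j)


open Filter Topology

/-- reciprocal q-factorial, extended by zero to negative integers -/
noncomputable def CC (Q : ℂ) (z : ℤ) : ℂ := if 0 ≤ z then (qPoch Q Q z.toNat)⁻¹ else 0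

lemma CC_neg {Q : ℂ} {z : ℤ} (h : z < 0) : CC Q z = 0 := by
  simp [CC, not_le.2 h]

lemma CC_nat (Q : ℂ) (n : ℕ) : CC Q n = (qPoch Q Q n)⁻¹ := by
  simp [CC]

lemma CC_zero (Q : ℂ) : CC Q 0 = 1 := by
  simp [CC, qPoch]

lemma pow_ne_one' {Q : ℂ} (hQ : ‖Q‖ < 1) (n : ℕ) : 1 - Q ^ (n + 1) ≠ 0 := by
  intro h
  have h2 : Q ^ (n + 1) = 1 := (sub_eq_zero.1 h).symm
  have h3 : ‖Q‖ ^ (n + 1) = 1 := by rw [← norm_pow, h2, norm_one]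
  have := pow_lt_one₀ (norm_nonneg Q) hQ (Nat.add_one_ne_zero n)
  linarith

lemma qPoch_self_ne {Q : ℂ} (hQ : ‖Q‖ < 1) (n : ℕ) : qPoch Q Q n ≠ 0 := by
  unfold qPoch
  rw [Finset.prod_ne_zero_iff]
  intro j _
  have := pow_ne_one' hQ j
  rwa [pow_succ'] at this

lemma qPoch_succ (x q : ℂ) (n : ℕ) : qPoch x q (n + 1) = qPoch x q n * (1 - x * q ^ n) := by
  simp [qPoch, Finset.prod_range_succ]

lemma qPoch_succ' (x q : ℂ) (n : ℕ) : qPoch x q (n + 1) = (1 - x) * qPoch (x * q) q n := by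
  simp only [qPoch, Finset.prod_range_succ', pow_zero, mul_one]
  rw [mul_comm]
  congr 1
  apply Finset.prod_congr rfl
  intro j _
  rw [pow_succ']; ring

lemma CC_rec {Q : ℂ} (hQ : ‖Q‖ < 1) (z : ℤ) : (1 - Q ^ z) * CC Q z = CC Q (z - 1) := by
  rcases lt_trichotomy z 0 with h | h | h
  · rw [CC_neg h, CC_neg (by omega)]; simp
  · subst h; rw [CC_neg (by omega : (0 : ℤ) - 1 < 0)]; simp
  · obtain ⟨n, rfl⟩ : ∃ n : ℕ, z = (n + 1 : ℕ) := ⟨z.toNat - 1, by omega⟩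
    have e : ((n + 1 : ℕ) : ℤ) - 1 = (n : ℕ) := by push_cast; ring
    rw [e, CC_nat, CC_nat, qPoch_succ, zpow_natCast, ← pow_succ']
    have h1 := pow_ne_one' hQ n
    have h2 := qPoch_self_ne hQ n
    field_simp

lemma summ (Q : ℂ) (f : ℤ → ℂ) (a b : ℤ) :
    Summable fun m : ℤ => f m * (CC Q (a - m) * CC Q (b + m)) := by
  apply summable_of_ne_finset_zero (s := Finset.Icc (-b) a)
  intro m hm
  rw [Finset.mem_Icc, not_and_or] at hm
  rcases hm with h | h
  · rw [CC_neg (by omega : b + m < 0)]; simp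
  · rw [CC_neg (by omega : a - m < 0)]; simp

lemma tsum_shift (f : ℤ → ℂ) (c : ℤ) : ∑' m : ℤ, f m = ∑' m : ℤ, f (m + c) :=
  ((Equiv.addRight c).tsum_eq f).symm

/-- finite triple product sum -/
noncomputable def JJ (q : ℂ) (i : ℤ) (P : ℂ) (a b : ℤ) : ℂ :=
  ∑' m : ℤ, q ^ (2 * i * m ^ 2 + m) * (CC P (b - m) * CC P (a + m))

lemma JJ_b {q P : ℂ} {i : ℤ} (hq : q ≠ 0) (hP : ‖P‖ < 1) (hPq : P = q ^ (4 * i)) (a b : ℤ) :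
    (1 - P ^ (a + b + 1)) * JJ q i P a (b + 1) = (1 + q ^ (4 * i * b + 2 * i + 1)) * JJ q i P a b := by
  have hP0 : P ≠ 0 := by rw [hPq]; exact zpow_ne_zero _ hq
  have key : ∀ m : ℤ, (1 - P ^ (a + b + 1)) * (q ^ (2 * i * m ^ 2 + m) * (CC P (b + 1 - m) * CC P (a + m)))
      = q ^ (2 * i * m ^ 2 + m) * (CC P (b - m) * CC P (a + m)) +
        (q ^ (2 * i * m ^ 2 + m) * P ^ (b + 1 - m)) * (CC P (b + 1 - m) * CC P ((a - 1) + m)) := by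
    intro m
    have e1 := CC_rec hP (b + 1 - m)
    have e2 := CC_rec hP (a + m)
    rw [show b + 1 - m - 1 = b - m by ring] at e1
    rw [show a + m - 1 = a - 1 + m by ring] at e2
    have e3 : P ^ (a + b + 1) = P ^ (b + 1 - m) * P ^ (a + m) := by
      rw [← zpow_add₀ hP0]; congr 1; ring
    rw [← e1, ← e2, e3]; ring
  unfold JJ
  rw [← tsum_mul_left, tsum_congr key, Summable.tsum_add (summ _ _ _ _) (summ _ _ _ _), add_mul, one_mul]
  congr 1
  rw [tsum_shift _ 1, ← tsum_mul_left]
  apply tsum_congr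
  intro m
  rw [show b + 1 - (m + 1) = b - m by ring, show a - 1 + (m + 1) = a + m by ring, hPq, ← zpow_mul,
    ← zpow_add₀ hq, ← mul_assoc (q ^ (_ : ℤ)) (q ^ (_ : ℤ)), ← zpow_add₀ hq]
  congr 2
  ring

lemma JJ_a {q P : ℂ} {i : ℤ} (hq : q ≠ 0) (hP : ‖P‖ < 1) (hPq : P = q ^ (4 * i)) (a b : ℤ) :
    (1 - P ^ (a + b + 1)) * JJ q i P (a + 1) b = (1 + q ^ (4 * i * a + 2 * i - 1)) * JJ q i P a b := by
  have hP0 : P ≠ 0 := by rw [hPq]; exact zpow_ne_zero _ hq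
  have key : ∀ m : ℤ, (1 - P ^ (a + b + 1)) * (q ^ (2 * i * m ^ 2 + m) * (CC P (b - m) * CC P (a + 1 + m)))
      = q ^ (2 * i * m ^ 2 + m) * (CC P (b - m) * CC P (a + m)) +
        (q ^ (2 * i * m ^ 2 + m) * P ^ (a + 1 + m)) * (CC P (b - 1 - m) * CC P (a + 1 + m)) := by
    intro m
    have e1 := CC_rec hP (b - m)
    have e2 := CC_rec hP (a + 1 + m)
    rw [show b - m - 1 = b - 1 - m by ring] at e1
    rw [show a + 1 + m - 1 = a + m by ring] at e2
    have e3 : P ^ (a + b + 1) = P ^ (b - m) * P ^ (a + 1 + m) := by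
      rw [← zpow_add₀ hP0]; congr 1; ring
    rw [← e1, ← e2, e3]; ring
  unfold JJ
  rw [← tsum_mul_left, tsum_congr key, Summable.tsum_add (summ _ _ _ _) (summ _ _ _ _), add_mul, one_mul]
  congr 1
  rw [tsum_shift _ (-1), ← tsum_mul_left]
  apply tsum_congr
  intro m
  rw [show b - 1 - (m + -1) = b - m by ring, show a + 1 + (m + -1) = a + m by ring, hPq, ← zpow_mul,
    ← zpow_add₀ hq, ← mul_assoc (q ^ (_ : ℤ)) (q ^ (_ : ℤ)), ← zpow_add₀ hq]
  congr 2
  ring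

lemma tsum_CC_zero (Q : ℂ) (f : ℤ → ℂ) : ∑' m : ℤ, f m * (CC Q (0 - m) * CC Q (0 + m)) = f 0 := by
  rw [tsum_eq_single 0]
  · simp [CC_zero]
  · intro m hm
    rcases lt_or_gt_of_ne hm with h | h
    · rw [CC_neg (by omega : 0 + m < 0)]; simp
    · rw [CC_neg (by omega : 0 - m < 0)]; simp

lemma JJ_eq {q P : ℂ} {i : ℕ} (hi : 1 ≤ i) (hq : q ≠ 0) (hP : ‖P‖ < 1) (hPq : P = q ^ (4 * i)) (n : ℕ) :
    JJ q i P n n = qPoch (-(q ^ (2 * i - 1))) P n * qPoch (-(q ^ (2 * i + 1))) P n * CC P ((2 * n : ℕ) : ℤ) := by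
  have hPq' : P = q ^ (4 * (i : ℤ)) := by rw [hPq]; norm_cast
  induction n with
  | zero =>
    unfold JJ
    rw [show ((0 : ℕ) : ℤ) = 0 from rfl, tsum_CC_zero]; simp [qPoch, CC_zero]
  | succ n ih =>
    have e1 := JJ_b hq hP hPq' (n + 1) n
    have e2 := JJ_a hq hP hPq' n n
    have h1 := pow_ne_one' hP (2 * n + 1)
    have h2 := pow_ne_one' hP (2 * n)
    have h3 := qPoch_self_ne hP (2 * n)
    rw [ih] at e2
    rw [show ((n : ℤ) + 1 + n + 1) = ((2 * n + 1 + 1 : ℕ) : ℤ) by push_cast; ring, zpow_natCast] at e1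
    rw [show ((n : ℤ) + n + 1) = ((2 * n + 1 : ℕ) : ℤ) by push_cast; ring, zpow_natCast] at e2
    have x1 : q ^ (4 * (i : ℤ) * n + 2 * i + 1) = q ^ (2 * i + 1) * P ^ n := by
      rw [hPq, ← pow_mul, ← pow_add, ← zpow_natCast]; congr 1; push_cast; ring
    have x2 : q ^ (4 * (i : ℤ) * n + 2 * i - 1) = q ^ (2 * i - 1) * P ^ n := by
      rw [hPq, ← pow_mul, ← pow_add, ← zpow_natCast]; congr 1
      obtain ⟨l, rfl⟩ : ∃ l, i = l + 1 := ⟨i - 1, by omega⟩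
      rw [show 2 * (l + 1) - 1 = 2 * l + 1 by omega]
      push_cast; ring
    rw [x1] at e1
    rw [x2] at e2
    push_cast
    have g2 := (eq_div_iff h2).2 ((mul_comm _ _).trans e2)
    have g1 := (eq_div_iff h1).2 ((mul_comm _ _).trans e1)
    rw [g1, g2, show (2 * ((n : ℤ) + 1)) = ((2 * n + 1 + 1 : ℕ) : ℤ) by push_cast; ring, CC_nat, CC_nat,
      qPoch_succ, qPoch_succ, qPoch_succ, qPoch_succ, ← pow_succ', ← pow_succ']
    field_simp
    ring

/-- base sum -/
noncomputable def SS (q : ℂ) (N : ℤ) : ℂ :=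
  ∑' j : ℤ, q ^ (j ^ 2 + (N - j) ^ 2 - j) * (CC (q ^ 2) (N - j) * CC (q ^ 2) (0 + j))

lemma norm_sq_lt {q : ℂ} (h : ‖q‖ < 1) : ‖q ^ 2‖ < 1 := by
  rw [norm_pow]; exact pow_lt_one₀ (norm_nonneg _) h two_ne_zero

lemma SS_rec {q : ℂ} (hq : q ≠ 0) (h1 : ‖q‖ < 1) (N : ℤ) :
    q ^ (-N) * SS q N = SS q N + q ^ (-1 : ℤ) * SS q (N - 1) := by
  have hQ := norm_sq_lt h1
  have step : q ^ (-N) * SS q N = ∑' j : ℤ, q ^ (j ^ 2 + (N - j) ^ 2 - j - 2 * (N - j)) *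
      (CC (q ^ 2) (N - j) * CC (q ^ 2) (0 + j)) := by
    unfold SS
    rw [← tsum_mul_left, ← (Equiv.subLeft N).tsum_eq]
    apply tsum_congr
    intro j
    simp only [Equiv.subLeft_apply]
    rw [← mul_assoc, ← zpow_add₀ hq, show N - (N - j) = 0 + j by ring, show 0 + (N - j) = N - j by ring,
      mul_comm (CC _ _) (CC _ _)]
    congr 2
    ring
  have key : ∀ j : ℤ, q ^ (j ^ 2 + (N - j) ^ 2 - j - 2 * (N - j)) * (CC (q ^ 2) (N - j) * CC (q ^ 2) (0 + j))
     = q ^ (j ^ 2 + (N - j) ^ 2 - j) * (CC (q ^ 2) (N - j) * CC (q ^ 2) (0 + j)) +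
       q ^ (-1 : ℤ) * (q ^ (j ^ 2 + (N - 1 - j) ^ 2 - j) * (CC (q ^ 2) (N - 1 - j) * CC (q ^ 2) (0 + j))) := by
    intro j
    have e1 := CC_rec hQ (N - j)
    rw [show N - j - 1 = N - 1 - j by ring] at e1
    have e2 : (q ^ 2 : ℂ) ^ (N - j) = q ^ (2 * (N - j)) := by
      rw [zpow_mul]; norm_cast
    have e3 : q ^ (j ^ 2 + (N - 1 - j) ^ 2 - j) = q * q ^ (j ^ 2 + (N - j) ^ 2 - j - 2 * (N - j)) := by
      rw [← zpow_one_add₀ hq]; congr 1; ring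
    have e4 : q ^ (j ^ 2 + (N - j) ^ 2 - j) = q ^ (j ^ 2 + (N - j) ^ 2 - j - 2 * (N - j)) * q ^ (2 * (N - j)) := by
      rw [← zpow_add₀ hq]; congr 1; ring
    rw [← e1, e2, e3, e4, zpow_neg_one]
    field_simp
    ring
  rw [step, tsum_congr key, Summable.tsum_add (summ _ _ _ _) ((summ _ _ _ _).mul_left _), tsum_mul_left]
  rfl

lemma SS_eq {q : ℂ} (hq : q ≠ 0) (h1 : ‖q‖ < 1) (N : ℕ) :
    q ^ N * SS q N = q ^ (N * (N + 1) / 2) * (qPoch q q N)⁻¹ := by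
  induction N with
  | zero =>
    unfold SS
    rw [show ((0 : ℕ) : ℤ) = 0 from rfl, tsum_CC_zero]; simp [qPoch]
  | succ n ih =>
    have e := SS_rec hq h1 (n + 1 : ℕ)
    have h2 := pow_ne_one' h1 n
    have h3 := qPoch_self_ne h1 n
    rw [show ((n + 1 : ℕ) : ℤ) - 1 = n by push_cast; ring, zpow_neg, zpow_natCast, zpow_neg_one] at e
    rw [show (n + 1) * (n + 1 + 1) / 2 = n * (n + 1) / 2 + (n + 1) by
      rw [show (n + 1) * (n + 1 + 1) = n * (n + 1) + (n + 1) * 2 by ring,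
        Nat.add_mul_div_right _ _ two_pos], qPoch_succ, ← pow_succ', pow_add, mul_inv]
    have hq1 : q ^ (n + 1) ≠ 0 := pow_ne_zero _ hq
    have e' : (1 - q ^ (n + 1)) * SS q ((n + 1 : ℕ) : ℤ) = q ^ n * SS q n := by
      field_simp at e
      have : q * ((1 - q ^ (n + 1)) * SS q ((n + 1 : ℕ) : ℤ)) = q * (q ^ n * SS q n) := by
        linear_combination e
      exact mul_left_cancel₀ hq this
    rw [ih] at e'
    have g := (eq_div_iff h2).2 ((mul_comm _ _).trans e')
    rw [g]
    ring

noncomputable def DD (Q a : ℂ) (r : ℤ) : ℂ := (qPoch (a * Q) Q r.toNat)⁻¹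

lemma DD_nat (Q a : ℂ) (n : ℕ) : DD Q a n = (qPoch (a * Q) Q n)⁻¹ := by simp [DD]

lemma VV_eq {Q : ℂ} (hQ0 : Q ≠ 0) (hQ : ‖Q‖ < 1) (n : ℕ) :
    ∀ a : ℂ, a ≠ 0 → (∀ j : ℕ, 1 - a * Q ^ (j + 1) ≠ 0) →
    ∑' r : ℤ, (Q ^ (r ^ 2) * a ^ r * DD Q a r) * (CC Q (n - r) * CC Q (0 + r)) = CC Q n * DD Q a n := by
  induction n with
  | zero =>
    intro a ha _
    rw [show ((0 : ℕ) : ℤ) = 0 from rfl, tsum_CC_zero]; simp [CC_zero]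
  | succ n ih =>
    intro a ha h
    have h' : ∀ j : ℕ, 1 - a * Q * Q ^ (j + 1) ≠ 0 := by
      intro j
      have := h (j + 1)
      rwa [mul_assoc, ← pow_succ']
    have h0 : 1 - a * Q ≠ 0 := by simpa using h 0
    have i1 := ih a ha h
    have i2 := ih (a * Q) (mul_ne_zero ha hQ0) h'
    have hn := pow_ne_one' hQ n
    have key : ∀ r : ℤ, (1 - Q ^ (n + 1)) *
        ((Q ^ (r ^ 2) * a ^ r * DD Q a r) * (CC Q ((n + 1 : ℕ) - r) * CC Q (0 + r))) =
        (Q ^ (r ^ 2) * a ^ r * DD Q a r) * (CC Q (n - r) * CC Q (0 + r)) +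
        (Q ^ (r ^ 2) * a ^ r * DD Q a r * Q ^ ((n + 1 : ℕ) - r)) * (CC Q ((n + 1 : ℕ) - r) * CC Q (-1 + r)) := by
      intro r
      have e1 := CC_rec hQ ((n + 1 : ℕ) - r)
      have e2 := CC_rec hQ (0 + r)
      rw [show ((n + 1 : ℕ) : ℤ) - r - 1 = n - r by push_cast; ring] at e1
      rw [show 0 + r - 1 = -1 + r by ring] at e2
      have e3 : Q ^ (n + 1) = Q ^ (((n + 1 : ℕ) : ℤ) - r) * Q ^ (0 + r) := by
        rw [← zpow_add₀ hQ0, ← zpow_natCast]; congr 1; ring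
      rw [← e1, ← e2, e3]; ring
    have key2 : ∀ r : ℤ, (Q ^ ((r + 1) ^ 2) * a ^ (r + 1) * DD Q a (r + 1) * Q ^ ((n + 1 : ℕ) - (r + 1))) *
        (CC Q ((n + 1 : ℕ) - (r + 1)) * CC Q (-1 + (r + 1))) = (a * Q ^ (n + 1) / (1 - a * Q)) *
        ((Q ^ (r ^ 2) * (a * Q) ^ r * DD Q (a * Q) r) * (CC Q (n - r) * CC Q (0 + r))) := by
      intro r
      rw [show -1 + (r + 1) = 0 + r by ring, show ((n + 1 : ℕ) : ℤ) - (r + 1) = n - r by push_cast; ring]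
      rcases lt_or_ge r 0 with hr | hr
      · rw [CC_neg (by omega : 0 + r < 0)]; simp
      · obtain ⟨t, rfl⟩ := Int.eq_ofNat_of_zero_le hr
        have e1 : DD Q a ((t : ℤ) + 1) = (1 - a * Q)⁻¹ * DD Q (a * Q) t := by
          rw [show (t : ℤ) + 1 = ((t + 1 : ℕ) : ℤ) by push_cast; ring, DD_nat, DD_nat, qPoch_succ', mul_inv]
        have e2 : Q ^ (((t : ℤ) + 1) ^ 2) * Q ^ ((n : ℤ) - t) = Q ^ (n + 1) * (Q ^ ((t : ℤ) ^ 2) * Q ^ (t : ℤ)) := by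
          rw [← zpow_natCast, ← zpow_add₀ hQ0, ← zpow_add₀ hQ0, ← zpow_add₀ hQ0]; congr 1; push_cast; ring
        rw [e1, mul_zpow, zpow_add₀ ha, zpow_one]
        linear_combination (a ^ (t : ℤ) * a * ((1 - a * Q)⁻¹ * DD Q (a * Q) t) * (CC Q (n - t) * CC Q (0 + t))) * e2
    have tot : (1 - Q ^ (n + 1)) * ∑' r : ℤ, (Q ^ (r ^ 2) * a ^ r * DD Q a r) *
        (CC Q ((n + 1 : ℕ) - r) * CC Q (0 + r)) = CC Q n * DD Q a n +
        (a * Q ^ (n + 1) / (1 - a * Q)) * (CC Q n * DD Q (a * Q) n) := by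
      rw [← tsum_mul_left, tsum_congr key, Summable.tsum_add (summ _ _ _ _) (summ _ _ _ _), i1]
      congr 1
      rw [tsum_shift _ 1, tsum_congr key2, tsum_mul_left, i2]
    have g := (eq_div_iff hn).2 ((mul_comm _ _).trans tot)
    rw [g]
    have hp : qPoch (a * Q) Q n * (1 - a * Q * Q ^ n) = (1 - a * Q) * qPoch (a * Q * Q) Q n := by
      rw [← qPoch_succ, ← qPoch_succ']
    have hx : 1 - a * Q * Q ^ n ≠ 0 := by
      have := h n
      rwa [mul_assoc, ← pow_succ']
    have hy : qPoch (a * Q) Q n ≠ 0 := by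
      unfold qPoch
      rw [Finset.prod_ne_zero_iff]
      intro j _
      have := h j
      rwa [mul_assoc, ← pow_succ']
    have hz : (qPoch (a * Q * Q) Q n)⁻¹ = (1 - a * Q) / (qPoch (a * Q) Q n * (1 - a * Q * Q ^ n)) := by
      rw [hp]; field_simp
    rw [CC_nat, CC_nat, DD_nat, DD_nat, DD_nat, hz, qPoch_succ, qPoch_succ, ← pow_succ']
    have hc := qPoch_self_ne hQ n
    have hx2 : 1 - a * Q ^ (n + 1) ≠ 0 := h n
    have hx' : a * Q * Q ^ n = a * Q ^ (n + 1) := by ring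
    rw [hx']
    field_simp
    ring

lemma CC_add {Q : ℂ} (m t : ℕ) :
    CC Q ((t : ℤ) + 2 * m) = CC Q (2 * m : ℕ) * DD Q (Q ^ (2 * m)) t := by
  rw [show (t : ℤ) + 2 * m = ((2 * m + t : ℕ) : ℤ) by push_cast; ring, CC_nat, CC_nat, DD_nat, ← mul_inv]
  congr 1
  unfold qPoch
  rw [Finset.prod_range_add]
  congr 1
  apply Finset.prod_congr rfl
  intro j _
  rw [pow_add]; ring

lemma bailey_aux {Q : ℂ} (hQ0 : Q ≠ 0) (hQ : ‖Q‖ < 1) (n m : ℕ) :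
    ∑' r : ℤ, Q ^ (r ^ 2) * CC Q (n - r) * (CC Q (r - m) * CC Q (r + m)) =
      Q ^ ((m : ℤ) ^ 2) * (CC Q (n - m) * CC Q (n + m)) := by
  rw [tsum_shift _ m]
  rcases lt_or_ge n m with h | h
  · rw [CC_neg (by omega : (n : ℤ) - m < 0)]
    simp only [zero_mul, mul_zero]
    convert tsum_zero with r
    rcases lt_or_ge r 0 with hr | hr
    · rw [CC_neg (by omega : r + m - m < 0)]; simp
    · rw [CC_neg (by omega : (n : ℤ) - (r + m) < 0)]; simp
  · obtain ⟨N, rfl⟩ := Nat.exists_eq_add_of_le h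
    have ha : Q ^ (2 * m) ≠ 0 := pow_ne_zero _ hQ0
    have hv := VV_eq hQ0 hQ N (Q ^ (2 * m)) ha (by
      intro j
      rw [← pow_add, ← add_assoc]
      exact pow_ne_one' hQ _)
    have key : ∀ r : ℤ, Q ^ ((r + m) ^ 2) * CC Q ((m + N : ℕ) - (r + m)) * (CC Q (r + m - m) * CC Q (r + m + m))
        = (Q ^ ((m : ℤ) ^ 2) * CC Q (2 * m : ℕ)) *
          ((Q ^ (r ^ 2) * (Q ^ (2 * m)) ^ r * DD Q (Q ^ (2 * m)) r) * (CC Q (N - r) * CC Q (0 + r))) := by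
      intro r
      rw [show r + m - m = 0 + r by ring, show ((m + N : ℕ) : ℤ) - (r + m) = N - r by push_cast; ring]
      rcases lt_or_ge r 0 with hr | hr
      · rw [CC_neg (by omega : 0 + r < 0)]; simp
      · obtain ⟨t, rfl⟩ := Int.eq_ofNat_of_zero_le hr
        rw [show (t : ℤ) + m + m = t + 2 * m by ring, CC_add]
        have e2 : Q ^ (((t : ℤ) + m) ^ 2) = Q ^ ((m : ℤ) ^ 2) * (Q ^ ((t : ℤ) ^ 2) * (Q ^ (2 * m)) ^ (t : ℤ)) := by
          rw [← zpow_natCast Q (2 * m), ← zpow_mul, ← zpow_add₀ hQ0, ← zpow_add₀ hQ0]; congr 1; push_cast; ring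
        rw [e2]; ring
    rw [tsum_congr key, tsum_mul_left, hv, show ((m + N : ℕ) : ℤ) - m = N by push_cast; ring,
      show ((m + N : ℕ) : ℤ) + m = N + 2 * m by push_cast; ring, CC_add]
    ring

lemma bailey {Q : ℂ} (hQ0 : Q ≠ 0) (hQ : ‖Q‖ < 1) (n : ℕ) (m : ℤ) :
    ∑' r : ℤ, Q ^ (r ^ 2) * CC Q (n - r) * (CC Q (r - m) * CC Q (r + m)) =
      Q ^ (m ^ 2) * (CC Q (n - m) * CC Q (n + m)) := by
  obtain ⟨k, rfl | rfl⟩ := Int.eq_nat_or_neg m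
  · exact bailey_aux hQ0 hQ n k
  · have := bailey_aux hQ0 hQ n k
    rw [neg_sq, sub_neg_eq_add, ← sub_eq_add_neg, mul_comm (CC Q _) (CC Q _), ← this]
    apply tsum_congr
    intro r
    rw [sub_neg_eq_add, ← sub_eq_add_neg, mul_comm (CC Q (r + k)) (CC Q _)]

lemma qPoch_two_mul (q : ℂ) (r : ℕ) : qPoch q q (2 * r) = qPoch q (q ^ 2) r * qPoch (q ^ 2) (q ^ 2) r := by
  induction r with
  | zero => simp [qPoch]
  | succ r ih =>
    rw [show 2 * (r + 1) = 2 * r + 1 + 1 by ring, qPoch_succ, qPoch_succ, ih, qPoch_succ, qPoch_succ]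
    rw [pow_succ, pow_mul]
    ring

lemma nat_tsum (f : ℤ → ℂ) (h : ∀ z < 0, f z = 0) : ∑' z : ℤ, f z = ∑' r : ℕ, f r := by
  symm
  apply Function.Injective.tsum_eq Nat.cast_injective
  intro z hz
  rcases lt_or_ge z 0 with h1 | h1
  · exact absurd (h z h1) hz
  · exact ⟨z.toNat, by simp [h1]⟩

/-- The linear perturbation fixes `1 / (q;q)_{2n}`. -/
lemma fixpt {q : ℂ} (hq : q ≠ 0) (h1 : ‖q‖ < 1) (n : ℕ) :
    ∑' r : ℕ, CC (q ^ 2) ((n : ℤ) - r) * q ^ (2 * (r : ℤ) ^ 2 - r) * (qPoch q q (2 * r))⁻¹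
      = (qPoch q q (2 * n))⁻¹ := by
  have hQ := norm_sq_lt h1
  have hQ0 : q ^ 2 ≠ 0 := pow_ne_zero _ hq
  have e : q⁻¹ * q ^ 2 = q := by field_simp
  have hv := VV_eq hQ0 hQ n q⁻¹ (inv_ne_zero hq) (by
    intro j
    rw [pow_succ', ← mul_assoc, e, ← pow_mul, ← pow_succ']
    exact pow_ne_one' h1 _)
  have hD : ∀ r : ℕ, (qPoch q q (2 * r))⁻¹ = CC (q ^ 2) r * DD (q ^ 2) q⁻¹ r := by
    intro r
    rw [DD_nat, e, CC_nat, qPoch_two_mul, mul_inv, mul_comm]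
  rw [hD, ← hv, nat_tsum]
  · apply tsum_congr
    intro r
    rw [hD, zero_add]
    have : q ^ (2 * (r : ℤ) ^ 2 - r) = (q ^ 2) ^ ((r : ℤ) ^ 2) * q⁻¹ ^ (r : ℤ) := by
      rw [inv_zpow', ← zpow_natCast q 2, ← zpow_mul, ← zpow_add₀ hq]; congr 1
    rw [this]; ring
  · intro z hz
    rw [CC_neg (by omega : 0 + z < 0)]; simp

/-- bilateral Bailey β -/
noncomputable def beta (q : ℂ) (j : ℕ) (n : ℕ) : ℂ :=
  ∑' m : ℤ, q ^ (2 * ((j : ℤ) + 1) * m ^ 2 + m) * (CC (q ^ 2) (n - m) * CC (q ^ 2) (n + m))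

lemma beta_zero {q : ℂ} (hq : q ≠ 0) (h1 : ‖q‖ < 1) (n : ℕ) : beta q 0 n = (qPoch q q (2 * n))⁻¹ := by
  have h := SS_eq hq h1 (2 * n)
  have hS : q ^ (2 * n) * SS q (2 * n : ℕ) = q ^ (2 * n * (2 * n + 1) / 2) * beta q 0 n := by
    unfold SS beta
    rw [← tsum_mul_left, ← tsum_mul_left, ← (Equiv.subLeft (n : ℤ)).tsum_eq]
    apply tsum_congr
    intro m
    simp only [Equiv.subLeft_apply]
    rw [show ((2 * n : ℕ) : ℤ) - (n - m) = n + m by push_cast; ring, zero_add,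
      show 2 * n * (2 * n + 1) / 2 = n * (2 * n + 1) by
        rw [show 2 * n * (2 * n + 1) = 2 * (n * (2 * n + 1)) by ring]; exact Nat.mul_div_cancel_left _ two_pos]
    have e : q ^ (2 * n) * q ^ (((n : ℤ) - m) ^ 2 + (n + m) ^ 2 - (n - m)) =
        q ^ (n * (2 * n + 1)) * q ^ (2 * (((0 : ℕ) : ℤ) + 1) * m ^ 2 + m) := by
      rw [← zpow_natCast, ← zpow_natCast, ← zpow_add₀ hq, ← zpow_add₀ hq]
      congr 1
      push_cast
      ring
    linear_combination (CC (q ^ 2) (n - m) * CC (q ^ 2) (n + m)) * e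
  rw [hS] at h
  exact mul_left_cancel₀ (pow_ne_zero _ hq) h

lemma beta_succ {q : ℂ} (hq : q ≠ 0) (h1 : ‖q‖ < 1) (j n : ℕ) :
    ∑' r : ℕ, CC (q ^ 2) ((n : ℤ) - r) * q ^ (2 * (r : ℤ) ^ 2) * beta q j r = beta q (j + 1) n := by
  have hQ := norm_sq_lt h1
  have hQ0 : q ^ 2 ≠ 0 := pow_ne_zero _ hq
  have hz : ∀ z : ℤ, (q ^ 2 : ℂ) ^ z = q ^ (2 * z) := by
    intro z; rw [zpow_mul]; norm_cast
  have hr : ∀ r : ℕ, CC (q ^ 2) ((n : ℤ) - r) * q ^ (2 * (r : ℤ) ^ 2) * beta q j r =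
      ∑ m ∈ Finset.Icc (-(n : ℤ)) n, CC (q ^ 2) ((n : ℤ) - r) * q ^ (2 * (r : ℤ) ^ 2) *
        (q ^ (2 * ((j : ℤ) + 1) * m ^ 2 + m) * (CC (q ^ 2) (r - m) * CC (q ^ 2) (r + m))) := by
    intro r
    rcases lt_or_ge n r with h | h
    · rw [CC_neg (by omega : (n : ℤ) - r < 0)]; simp
    · unfold beta
      rw [tsum_eq_sum (s := Finset.Icc (-(n : ℤ)) n), Finset.mul_sum]
      intro m hm
      rw [Finset.mem_Icc, not_and_or] at hm
      rcases hm with h | h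
      · rw [CC_neg (by omega : r + m < 0)]; simp
      · rw [CC_neg (by omega : r - m < 0)]; simp
  rw [tsum_congr hr, Summable.tsum_finsetSum]
  · unfold beta
    rw [tsum_eq_sum (s := Finset.Icc (-(n : ℤ)) n)]
    · apply Finset.sum_congr rfl
      intro m _
      have hb := bailey hQ0 hQ n m
      rw [nat_tsum] at hb
      · have e : q ^ (2 * (((j + 1 : ℕ) : ℤ) + 1) * m ^ 2 + m) =
            q ^ (2 * ((j : ℤ) + 1) * m ^ 2 + m) * (q ^ 2) ^ (m ^ 2) := by
          rw [hz, ← zpow_add₀ hq]; congr 1; push_cast; ring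
        rw [e, mul_assoc (q ^ (_ : ℤ)) ((q ^ 2) ^ (_ : ℤ)), ← hb, ← tsum_mul_left]
        apply tsum_congr
        intro r
        rw [hz]; ring
      · intro r hr
        rcases lt_or_ge m 0 with h | h
        · rw [CC_neg (by omega : r + m < 0)]; simp
        · rw [CC_neg (by omega : r - m < 0)]; simp
    · intro m hm
      rw [Finset.mem_Icc, not_and_or] at hm
      rcases hm with h | h
      · rw [CC_neg (by omega : n + m < 0)]; simp
      · rw [CC_neg (by omega : n - m < 0)]; simp
  · intro m _
    apply summable_of_ne_finset_zero (s := Finset.range (n + 1))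
    intro r hr
    rw [Finset.mem_range] at hr
    rw [CC_neg (by omega : (n : ℤ) - r < 0)]; simp

lemma summ_geo {x q : ℂ} (hq : ‖q‖ < 1) : Summable fun j : ℕ => ‖-(x * q ^ j)‖ := by
  simp only [norm_neg, norm_mul, norm_pow]
  exact (summable_geometric_of_lt_one (norm_nonneg _) hq).mul_left _

lemma qPoch_tendsto (x : ℂ) {q : ℂ} (hq : ‖q‖ < 1) :
    Tendsto (fun n => qPoch x q n) atTop (𝓝 (qPochInf x q)) := by
  have h := (multipliable_one_add_of_summable (summ_geo (x := x) hq)).tendsto_prod_tprod_nat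
  simp only [← sub_eq_add_neg] at h
  exact h

lemma qPochInf_ne {Q : ℂ} (hQ : ‖Q‖ < 1) : qPochInf Q Q ≠ 0 := by
  have h := tprod_one_add_ne_zero_of_summable (f := fun j : ℕ => -(Q * Q ^ j)) (by
    intro j
    rw [← sub_eq_add_neg, ← pow_succ']
    exact pow_ne_one' hQ j) (summ_geo hQ)
  simp only [← sub_eq_add_neg] at h
  exact h

lemma inv_tendsto {Q : ℂ} (hQ : ‖Q‖ < 1) :
    Tendsto (fun n : ℕ => CC Q n) atTop (𝓝 (qPochInf Q Q)⁻¹) := by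
  simp only [CC_nat]
  exact (qPoch_tendsto Q hQ).inv₀ (qPochInf_ne hQ)

lemma CC_tendsto {Q : ℂ} (hQ : ‖Q‖ < 1) (z : ℤ) :
    Tendsto (fun n : ℕ => CC Q (n + z)) atTop (𝓝 (qPochInf Q Q)⁻¹) := by
  have h : Tendsto (fun n : ℕ => ((n : ℤ) + z).toNat) atTop atTop := by
    apply tendsto_atTop.2
    intro b
    filter_upwards [eventually_ge_atTop (b + z.natAbs)] with n hn
    omega
  refine ((inv_tendsto hQ).comp h).congr' ?_
  filter_upwards [eventually_ge_atTop z.natAbs] with n hn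
  simp only [Function.comp]
  congr 1
  omega

lemma CC_bdd {Q : ℂ} (hQ : ‖Q‖ < 1) : ∃ K : ℝ, 0 ≤ K ∧ ∀ z, ‖CC Q z‖ ≤ K := by
  obtain ⟨K, hK⟩ := (inv_tendsto hQ).norm.bddAbove_range
  have hK' : ∀ n : ℕ, ‖CC Q n‖ ≤ K := fun n => hK ⟨n, rfl⟩
  have h0 : 0 ≤ K := (norm_nonneg _).trans (hK' 0)
  refine ⟨K, h0, fun z => ?_⟩
  rcases lt_or_ge z 0 with h | h
  · rw [CC_neg h]; simpa using h0
  · obtain ⟨n, rfl⟩ := Int.eq_ofNat_of_zero_le h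
    exact hK' n

lemma bilateral_tendsto {Q : ℂ} (hQ : ‖Q‖ < 1) (f : ℤ → ℂ) (hf : Summable fun m => ‖f m‖) :
    Tendsto (fun n : ℕ => ∑' m : ℤ, f m * (CC Q (n - m) * CC Q (n + m))) atTop
      (𝓝 (∑' m : ℤ, f m * ((qPochInf Q Q)⁻¹ * (qPochInf Q Q)⁻¹))) := by
  obtain ⟨K, h0, hK⟩ := CC_bdd hQ
  apply tendsto_tsum_of_dominated_convergence (bound := fun m => ‖f m‖ * (K * K)) (hf.mul_right _)
  · intro m
    have a := CC_tendsto hQ (-m)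
    have b := CC_tendsto hQ m
    simp only [← sub_eq_add_neg] at a
    exact (a.mul b).const_mul _
  · apply Eventually.of_forall
    intro n m
    rw [norm_mul, norm_mul]
    have a := hK (n - m)
    have b := hK (n + m)
    gcongr

lemma summ_theta {q : ℂ} (hq : q ≠ 0) (h1 : ‖q‖ < 1) (i : ℕ) (hi : 1 ≤ i) :
    Summable fun m : ℤ => ‖q ^ (2 * (i : ℤ) * m ^ 2 + m)‖ := by
  have hs : Summable fun m : ℤ => ‖q‖ ^ m.natAbs := by
    apply Summable.of_nat_of_neg
    · simpa using summable_geometric_of_lt_one (norm_nonneg _) h1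
    · simpa using summable_geometric_of_lt_one (norm_nonneg _) h1
  refine hs.of_nonneg_of_le (fun _ => norm_nonneg _) ?_
  intro m
  rw [norm_zpow, ← zpow_natCast]
  apply zpow_le_zpow_right_of_le_one₀ (norm_pos_iff.2 hq) h1.le
  have hi' : (1 : ℤ) ≤ i := by exact_mod_cast hi
  have h3 : m ^ 2 ≤ i * m ^ 2 := by nlinarith [sq_nonneg m]
  rw [Int.natCast_natAbs]
  rcases abs_cases m with ⟨h, h'⟩ | ⟨h, h'⟩ <;> rw [h] <;> nlinarith

/-- Jacobi triple product in the needed form. -/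
lemma jtp {q : ℂ} (hq : q ≠ 0) (h1 : ‖q‖ < 1) (i : ℕ) (hi : 1 ≤ i) :
    ∑' m : ℤ, q ^ (2 * (i : ℤ) * m ^ 2 + m) =
      qPochInf (q ^ (4 * i)) (q ^ (4 * i)) * qPochInf (-(q ^ (2 * i - 1))) (q ^ (4 * i)) *
        qPochInf (-(q ^ (2 * i + 1))) (q ^ (4 * i)) := by
  have hP : ‖q ^ (4 * i)‖ < 1 := by
    rw [norm_pow]; exact pow_lt_one₀ (norm_nonneg _) h1 (by omega)
  have a := bilateral_tendsto hP _ (summ_theta hq h1 i hi)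
  have b : Tendsto (fun n : ℕ => JJ q i (q ^ (4 * i)) n n) atTop (𝓝 _) := a
  simp only [JJ_eq hi hq hP rfl] at b
  have h2 : Tendsto (fun n : ℕ => 2 * n) atTop atTop := tendsto_id.const_mul_atTop' two_pos
  have c := (((qPoch_tendsto (-(q ^ (2 * i - 1))) hP).mul (qPoch_tendsto (-(q ^ (2 * i + 1))) hP))).mul
    ((inv_tendsto hP).comp h2)
  have := tendsto_nhds_unique b c
  rw [tsum_mul_right] at this
  have hne := qPochInf_ne hP
  field_simp at this
  rw [this]

noncomputable def PP (q : ℂ) : (d : ℕ) → (ℕ → ℕ → ℂ) → ℕ → (Fin d → ℕ) → ℂ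
  | 0, _, r, _ => (qPoch q q (2 * r))⁻¹
  | d + 1, w, r, s => CC (q ^ 2) ((r : ℤ) - s 0) * w 0 (s 0) *
      PP q d (fun m => w (m + 1)) (s 0) (fun m => s m.succ)

lemma summ_pi {ρ : ℝ} (h0 : 0 ≤ ρ) (h1 : ρ < 1) (d : ℕ) :
    Summable fun s : Fin d → ℕ => ∏ m, ρ ^ (s m) := by
  induction d with
  | zero => exact Summable.of_finite
  | succ d ih =>
    rw [← (Fin.consEquiv (fun _ : Fin (d + 1) => ℕ)).summable_iff]
    have := (summable_geometric_of_lt_one h0 h1).mul_of_nonneg ih (fun _ => by positivity)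
      (fun _ => by positivity)
    refine this.congr ?_
    intro x
    simp [Fin.consEquiv, Fin.prod_univ_succ]

lemma PP_bound {q : ℂ} {ρ K : ℝ} (h0 : 0 ≤ ρ) (hK0 : 0 ≤ K) (hK : ∀ z, ‖CC (q ^ 2) z‖ ≤ K)
    (hK' : ∀ z, ‖CC q z‖ ≤ K) (d : ℕ) : ∀ (w : ℕ → ℕ → ℂ), (∀ m x, ‖w m x‖ ≤ ρ ^ x) →
    ∀ r s, ‖PP q d w r s‖ ≤ K ^ (d + 1) * ∏ m, ρ ^ (s m) := by
  induction d with
  | zero =>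
    intro w hw r s
    have := hK' ((2 * r : ℕ) : ℤ)
    rw [CC_nat] at this
    simpa [PP] using this
  | succ d ih =>
    intro w hw r s
    have a := hK ((r : ℤ) - s 0)
    have b := hw 0 (s 0)
    have c := ih (fun m => w (m + 1)) (fun m x => hw _ x) (s 0) (fun m => s m.succ)
    rw [PP, norm_mul, norm_mul, Fin.prod_univ_succ]
    calc _ ≤ K * ρ ^ (s 0) * (K ^ (d + 1) * ∏ m : Fin d, ρ ^ (s m.succ)) := by
          gcongr
      _ = _ := by ring

lemma PP_summable {q : ℂ} (h1 : ‖q‖ < 1) (d : ℕ) (w : ℕ → ℕ → ℂ) (hw : ∀ m x, ‖w m x‖ ≤ ‖q‖ ^ x) (r : ℕ) :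
    Summable (PP q d w r) := by
  obtain ⟨K1, h01, hK1⟩ := CC_bdd (norm_sq_lt h1)
  obtain ⟨K2, h02, hK2⟩ := CC_bdd h1
  exact ((summ_pi (norm_nonneg q) h1 d).mul_left _).of_norm_bounded
    (PP_bound (norm_nonneg q) (le_max_of_le_left h01) (fun z => (hK1 z).trans (le_max_left K1 K2))
    (fun z => (hK2 z).trans (le_max_right K1 K2)) d w hw r)

lemma PP_tsum_succ {q : ℂ} (h1 : ‖q‖ < 1) (d : ℕ) (w : ℕ → ℕ → ℂ) (hw : ∀ m x, ‖w m x‖ ≤ ‖q‖ ^ x) (n : ℕ) :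
    ∑' s, PP q (d + 1) w n s = ∑' r : ℕ, CC (q ^ 2) ((n : ℤ) - r) * w 0 r *
      ∑' s, PP q d (fun m => w (m + 1)) r s := by
  have hs := PP_summable h1 (d + 1) w hw n
  rw [← (Fin.consEquiv (fun _ : Fin (d + 1) => ℕ)).summable_iff] at hs
  rw [← (Fin.consEquiv (fun _ : Fin (d + 1) => ℕ)).tsum_eq]
  refine hs.tsum_prod.trans ?_
  apply tsum_congr
  intro r
  rw [← tsum_mul_left]
  apply tsum_congr
  intro s
  simp [PP, Fin.consEquiv]

noncomputable def wt (q : ℂ) (j m x : ℕ) : ℂ := q ^ (2 * (x : ℤ) ^ 2 - if m < j then 0 else (x : ℤ))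

lemma wt_bound {q : ℂ} (hq : q ≠ 0) (h1 : ‖q‖ < 1) (j m x : ℕ) : ‖wt q j m x‖ ≤ ‖q‖ ^ x := by
  unfold wt
  rw [norm_zpow, ← zpow_natCast]
  apply zpow_le_zpow_right_of_le_one₀ (norm_pos_iff.2 hq) h1.le
  have h : (x : ℤ) ≤ x ^ 2 := by
    have := Nat.le_self_pow two_ne_zero x
    exact_mod_cast this
  split_ifs <;> omega

lemma PP_beta {q : ℂ} (hq : q ≠ 0) (h1 : ‖q‖ < 1) (d : ℕ) : ∀ j, j ≤ d → ∀ n,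
    ∑' s, PP q d (wt q j) n s = beta q j n := by
  induction d with
  | zero =>
    intro j hj n
    obtain rfl : j = 0 := by omega
    rw [beta_zero hq h1, tsum_fintype]
    simp [PP]
  | succ d ih =>
    intro j hj n
    rw [PP_tsum_succ h1 d _ (wt_bound hq h1 j)]
    rcases j with _ | j
    · have e : (fun m => wt q 0 (m + 1)) = wt q 0 := by
        funext m x; simp [wt]
      rw [e, beta_zero hq h1, ← fixpt hq h1]
      apply tsum_congr
      intro r
      rw [ih 0 (Nat.zero_le _), beta_zero hq h1]
      simp [wt]
    · have e : (fun m => wt q (j + 1) (m + 1)) = wt q j := by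
        funext m x; simp [wt]
      rw [e, ← beta_succ hq h1]
      apply tsum_congr
      intro r
      rw [ih j (by omega)]
      simp [wt]

/-- summand of the full multisum, over all tuples -/
noncomputable def TT (q : ℂ) (d : ℕ) (w : ℕ → ℕ → ℂ) (s : Fin (d + 1) → ℕ) : ℂ :=
  w 0 (s 0) * PP q d (fun m => w (m + 1)) (s 0) (fun m => s m.succ)

lemma TT_tsum {q : ℂ} (hq : q ≠ 0) (h1 : ‖q‖ < 1) (d i : ℕ) (hi : 1 ≤ i) (hd : i ≤ d + 2) :
    ∑' s, TT q d (wt q (i - 1)) s = (∑' m : ℤ, q ^ (2 * (i : ℤ) * m ^ 2 + m)) / qPochInf (q ^ 2) (q ^ 2) := by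
  have hQ := norm_sq_lt h1
  have hne := qPochInf_ne hQ
  obtain ⟨K1, h01, hK1⟩ := CC_bdd (norm_sq_lt h1)
  obtain ⟨K2, h02, hK2⟩ := CC_bdd h1
  have lim : Tendsto (fun n => ∑' s, PP q (d + 1) (wt q (i - 1)) n s) atTop
      (𝓝 (∑' s, (qPochInf (q ^ 2) (q ^ 2))⁻¹ * TT q d (wt q (i - 1)) s)) := by
    refine tendsto_tsum_of_dominated_convergence ((summ_pi (norm_nonneg q) h1 (d + 1)).mul_left _) ?_
      (Eventually.of_forall fun n => (PP_bound (norm_nonneg q) (le_max_of_le_left h01)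
      (fun z => (hK1 z).trans (le_max_left K1 K2))
      (fun z => (hK2 z).trans (le_max_right K1 K2)) (d + 1) _ (wt_bound hq h1 (i - 1)) n))
    intro s
    have a := CC_tendsto hQ (-(s 0 : ℤ))
    simp only [← sub_eq_add_neg] at a
    simp only [PP, TT, mul_assoc]
    exact a.mul_const _
  have lim2 := bilateral_tendsto hQ _ (summ_theta hq h1 i hi)
  have e : ∀ n : ℕ, ∑' s, PP q (d + 1) (wt q (i - 1)) n s =
      ∑' m : ℤ, q ^ (2 * (i : ℤ) * m ^ 2 + m) * (CC (q ^ 2) (n - m) * CC (q ^ 2) (n + m)) := by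
    intro n
    rw [PP_beta hq h1 (d + 1) (i - 1) (by omega), beta]
    have : ((i - 1 : ℕ) : ℤ) + 1 = i := by omega
    rw [this]
  simp only [e] at lim
  have := tendsto_nhds_unique lim lim2
  rw [tsum_mul_right, tsum_mul_left] at this
  field_simp at this ⊢
  exact this

lemma PP_ne {q : ℂ} (d : ℕ) : ∀ w r s, PP q d w r s ≠ 0 → Antitone s ∧ ∀ m, s m ≤ r := by
  induction d with
  | zero => intro w r s _; exact ⟨fun a => a.elim0, fun a => a.elim0⟩
  | succ d ih =>
    intro w r s h
    rw [PP] at h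
    obtain ⟨a, b⟩ := ih _ _ _ (right_ne_zero_of_mul h)
    have c : s 0 ≤ r := by
      by_contra hc
      rw [CC_neg (by omega)] at h
      simp at h
    refine ⟨?_, fun m => ?_⟩
    · intro x y hxy
      induction x using Fin.cases with
      | zero =>
        induction y using Fin.cases with
        | zero => exact le_rfl
        | succ y => exact b y
      | succ x =>
        induction y using Fin.cases with
        | zero => simp at hxy
        | succ y => exact a (Fin.succ_le_succ_iff.1 hxy)
    · induction m using Fin.cases with
      | zero => exact c
      | succ m => exact (b m).trans c

lemma PP_closed {q : ℂ} (d : ℕ) : ∀ w r s (u : ℕ → ℕ), Antitone s → (∀ m, s m ≤ r) → u 0 = r →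
    (∀ m : Fin d, u (m + 1) = s m) → PP q d w r s = (∏ m ∈ Finset.range d, w m (u (m + 1))) /
      ((∏ m ∈ Finset.range d, qPoch (q ^ 2) (q ^ 2) (u m - u (m + 1))) * qPoch q q (2 * u d)) := by
  induction d with
  | zero =>
    intro w r s u _ _ hu _
    simp [PP, hu]
  | succ d ih =>
    intro w r s u hs hr hu hu'
    have h0 : u 1 = s 0 := by simpa using hu' 0
    rw [PP, ih _ _ _ (fun m => u (m + 1)) (fun x y hxy => hs (Fin.succ_le_succ_iff.2 hxy))
      (fun m => hs (Fin.zero_le _)) h0 (fun m => by simpa using hu' m.succ), Finset.prod_range_succ',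
      Finset.prod_range_succ', hu, zero_add, h0]
    have := hr 0
    rw [show (r : ℤ) - s 0 = ((r - s 0 : ℕ) : ℤ) by omega, CC_nat]
    simp only [div_eq_mul_inv, mul_inv]
    ring

lemma wt_prod {q : ℂ} (hq : q ≠ 0) (j D : ℕ) (t : ℕ → ℕ) :
    ∏ m ∈ Finset.range D, wt q j m (t m) = q ^ (2 * ∑ m ∈ Finset.range D, ((t m : ℤ)) ^ 2 -
            ∑ m ∈ Finset.Ico j D, (t m : ℤ)) := by
  have h : ∑ m ∈ Finset.Ico j D, (t m : ℤ) = ∑ m ∈ Finset.range D, if m < j then 0 else (t m : ℤ) := by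
    have : Finset.Ico j D = (Finset.range D).filter (fun m => ¬ m < j) := by
      ext m; simp; omega
    rw [this, Finset.sum_filter]
    apply Finset.sum_congr rfl
    intro m _
    split_ifs <;> simp_all
  rw [h]
  clear h
  induction D with
  | zero => simp
  | succ D ih =>
    rw [Finset.prod_range_succ, ih, wt, ← zpow_add₀ hq, Finset.sum_range_succ, Finset.sum_range_succ]
    congr 1
    ring

/-- Proposition 4.2 (with `q` replaced by `q²`).  The tuple `s` encodes
`s_1 ≥ s_2 ≥ ⋯ ≥ s_{k-1} ≥ 0` via `s_m = t (m-1)`; the exponent of `q` is an integer. -/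
theorem proposition_4_2 (q : ℂ) (h0 : 0 < ‖q‖) (h1 : ‖q‖ < 1)
    (k i : ℕ) (hk : 2 ≤ k) (hi1 : 1 ≤ i) (hik : i ≤ k) :
    (∑' s : {s : Fin (k - 1) → ℕ // Antitone s},
      (let t : ℕ → ℕ := fun m => if h : m < k - 1 then s.1 ⟨m, h⟩ else 0
       q ^ (2 * ∑ m ∈ Finset.range (k - 1), ((t m : ℤ)) ^ 2 -
            ∑ m ∈ Finset.Ico (i - 1) (k - 1), (t m : ℤ)) /
         ((∏ m ∈ Finset.range (k - 2), qPoch (q ^ 2) (q ^ 2) (t m - t (m + 1))) *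
           qPoch q q (2 * t (k - 2))))) =
      qPochInf (q ^ (4 * i)) (q ^ (4 * i)) * qPochInf (-(q ^ (2 * i - 1))) (q ^ (4 * i)) *
        qPochInf (-(q ^ (2 * i + 1))) (q ^ (4 * i)) / qPochInf (q ^ 2) (q ^ 2) := by
  have hq : q ≠ 0 := norm_pos_iff.1 h0
  obtain ⟨d, rfl⟩ : ∃ d, k = d + 2 := ⟨k - 2, by omega⟩
  rw [← jtp hq h1 i hi1, ← TT_tsum hq h1 d i hi1 hik]
  have hsupp : Function.support (TT q d (wt q (i - 1))) ⊆
      Set.range (Subtype.val : {s : Fin (d + 1) → ℕ // Antitone s} → (Fin (d + 1) → ℕ)) := by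
    intro s hs
    refine ⟨⟨s, ?_⟩, rfl⟩
    obtain ⟨a, b⟩ := PP_ne _ _ _ _ (right_ne_zero_of_mul hs)
    intro x y hxy
    induction x using Fin.cases with
    | zero =>
      induction y using Fin.cases with
      | zero => exact le_rfl
      | succ y => exact b y
    | succ x =>
      induction y using Fin.cases with
      | zero => simp at hxy
      | succ y => exact a (Fin.succ_le_succ_iff.1 hxy)
  rw [← Subtype.val_injective.tsum_eq hsupp]
  apply tsum_congr
  intro s
  obtain ⟨s, hs⟩ := s
  change Fin (d + 1) → ℕ at s
  have hs' : ∀ x y : Fin (d + 1), x ≤ y → s y ≤ s x := fun x y h => hs h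
  simp only [show d + 2 - 1 = d + 1 from rfl, show d + 2 - 2 = d from rfl]
  generalize ht : (fun m : ℕ => if h : m < d + 1 then s ⟨m, h⟩ else 0) = t
  have ht' : ∀ m : ℕ, (if h : m < d + 1 then s ⟨m, h⟩ else 0) = t m := fun m => congrFun ht m
  simp only [ht']
  have t0 : t 0 = s 0 := by rw [← ht]; simp
  have t1 : ∀ m : Fin d, t (m + 1) = s m.succ := by
    intro m; rw [← ht]; simp [Fin.succ]
  rw [TT, PP_closed d _ _ _ t (fun x y hxy => hs' _ _ (Fin.succ_le_succ_iff.2 hxy))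
    (fun m => hs' _ _ (Fin.zero_le _)) t0 t1, ← wt_prod hq, Finset.prod_range_succ', t0]
  ring
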